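/- Let G be an infinite residually finite group. Then there exist a set X and an injective group homomorphism ι : G → Equiv.Perm X such that the subgroup of Equiv.Perm X generated by the image ι(G) together with FAlt(X) has the R_∞ property. -/

import Mathlib

/-- `FAlt X`: the subgroup of `Equiv.Perm X` generated by all 3-cycles, i.e. by those
permutations whose support has exactly 3 elements. -/
def FAlt (X : Type*) : Subgroup (Equiv.Perm X) :=
  Subgroup.closure {σ : Equiv.Perm X | {x | σ x ≠ x}.ncard = 3}

/-- Twisted conjugacy: `a` and `b` are `φ`-twisted conjugate if `(φ x)⁻¹ * a * x = b`
for some `x`. -/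
def TwistedConj {G : Type*} [Group G] (φ : G ≃* G) (a b : G) : Prop :=
  ∃ x : G, (φ x)⁻¹ * a * x = b

/-- A group has the `R∞` property if every automorphism has infinitely many twisted
conjugacy classes. -/
def RInfinity (G : Type*) [Group G] : Prop :=
  ∀ φ : G ≃* G, Infinite (Quot (TwistedConj φ))

universe u

/-!
`G` acts faithfully and with finite orbits on the disjoint union `X` of its finite quotients, each
repeated countably often so that `X` is infinite. An element of `H = ⟨G, FAlt X⟩` is a product of an
element of `G` and a finitely supported permutation, so every point of `X` is periodic under it.

In a group between `FAlt X` and `Perm X`, the 3-cycles are the elements `σ ≠ 1` with `σ ^ 3 = 1` and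
`(σ * σᵍ) ^ 5! = 1` for all conjugates `σᵍ`: two 3-cycles either commute or move at most five points
altogether. So automorphisms preserve 3-cycles. A point can be recovered from the involutions fixing
it, and these are detected by commutation with 3-cycles; hence every automorphism `φ` of `H` is
conjugation by a permutation `s` of `X`.

Then `b = (φ x)⁻¹ * a * x` agrees with `s` exactly on the preimage under `x` of the set where `a`
does. Since all points are periodic under `x`, that preimage is never strictly larger or smaller.
But multiplication by 3-cycles makes the set of agreement grow strictly as long as its complement is
infinite, and shrink strictly as long as it is itself infinite. A strictly monotone sequence of such
sets yields infinitely many classes.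
-/

open Equiv Function

section ThreeCycle

open scoped Nat

variable {X : Type*} {σ τ : Perm X}

/-- Mathlib's `Equiv.Perm.IsThreeCycle` requires the underlying type to be finite; this version
does not. It is the defining condition of the generators of `FAlt X`. -/
def IsThreeCycle (σ : Perm X) : Prop :=
  {x | σ x ≠ x}.ncard = 3

namespace IsThreeCycle

theorem mem_FAlt (hσ : IsThreeCycle σ) : σ ∈ FAlt X :=
  Subgroup.subset_closure hσ

theorem finite_setOf_apply_ne (hσ : IsThreeCycle σ) : {x | σ x ≠ x}.Finite :=
  Set.finite_of_ncard_ne_zero (hσ.trans_ne three_ne_zero)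

theorem conj (hσ : IsThreeCycle σ) (g : Perm X) : IsThreeCycle (g * σ * g⁻¹) := by
  have moved : {x | (g * σ * g⁻¹) x ≠ x} = g '' {x | σ x ≠ x} := by
    ext x
    simp [g.image_eq_preimage_symm, Equiv.eq_symm_apply]
  rw [IsThreeCycle, moved, Set.ncard_image_of_injective _ g.injective, hσ]

theorem apply_apply_ne (hσ : IsThreeCycle σ) {x : X} (hx : σ x ≠ x) : σ (σ x) ≠ x := by
  intro hxx
  obtain ⟨z, hz, hzx⟩ : ∃ z ∈ {y | σ y ≠ y}, z ∉ ({x, σ x} : Set X) :=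
    Set.exists_mem_notMem_of_ncard_lt_ncard (by rw [Set.ncard_pair hx.symm, hσ]; norm_num)
  have hz' : σ z ≠ z := hz
  have moved : {x, σ x, z, σ z} ⊆ {y | σ y ≠ y} := by
    have : σ (σ z) ≠ σ z := σ.injective.ne hz
    simp [Set.insert_subset_iff, hx, hx.symm, hxx, this, hz']
  have card_le := (Set.ncard_le_ncard moved hσ.finite_setOf_apply_ne).trans_eq hσ
  have : σ z ≠ σ x := σ.injective.ne (by grind)
  have : σ z ≠ x := hxx ▸ σ.injective.ne (by grind)
  rw [Set.ncard_insert_of_notMem (by grind), Set.ncard_insert_of_notMem (by grind),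
    Set.ncard_pair hz.symm] at card_le
  lia

theorem setOf_apply_ne_eq (hσ : IsThreeCycle σ) {x : X} (hx : σ x ≠ x) :
    {y | σ y ≠ y} = {x, σ x, σ (σ x)} := by
  refine (Set.eq_of_subset_of_ncard_le ?_ ?_ hσ.finite_setOf_apply_ne).symm
  · simp [Set.insert_subset_iff, hx]
  · rw [hσ, Set.ncard_eq_three.2 ⟨x, σ x, σ (σ x), hx.symm, (hσ.apply_apply_ne hx).symm,
      (σ.injective.ne hx).symm, rfl⟩]

theorem pow_three_eq_one (hσ : IsThreeCycle σ) : σ ^ 3 = 1 := by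
  ext x
  change σ (σ (σ x)) = x
  by_cases hx : σ x = x
  · simp only [hx]
  · have mem : σ (σ (σ x)) ∈ {y | σ y ≠ y} := by simpa using hx
    rw [hσ.setOf_apply_ne_eq hx] at mem
    have := hσ.apply_apply_ne hx
    grind [σ.injective.eq_iff]

theorem ne_one (hσ : IsThreeCycle σ) : σ ≠ 1 := by
  rintro rfl
  simp [IsThreeCycle] at hσ

end IsThreeCycle

theorem isThreeCycle_swap_mul_swap [DecidableEq X] {a b c : X} (hab : a ≠ b) (hbc : b ≠ c)
    (hac : a ≠ c) : IsThreeCycle (swap a b * swap b c) := by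
  refine Set.ncard_eq_three.2 ⟨a, b, c, hab, hac, hbc, ?_⟩
  ext x
  simp only [Perm.mul_apply, Set.mem_ofPred_eq, Set.mem_insert_iff, Set.mem_singleton_iff]
  grind

theorem swap_mul_swap_mem_FAlt [DecidableEq X] {a b c d : X} (h : [a, b, c, d].Nodup) :
    swap a b * swap c d ∈ FAlt X := by
  have split : swap a b * swap c d = (swap a b * swap b c) * (swap b c * swap c d) := by
    simp [mul_assoc]
  rw [split]
  apply mul_mem <;> exact (isThreeCycle_swap_mul_swap (by grind) (by grind) (by grind)).mem_FAlt

theorem pow_factorial_eq_one_of_apply_ne_mem {s : Set X} (hs : s.Finite)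
    (hσ : ∀ x, σ x ≠ x → x ∈ s) : σ ^ s.ncard ! = 1 := by
  classical
  have := hs.fintype
  have hmem : ∀ x, σ x ∈ s ↔ x ∈ s := fun x ↦ by
    by_cases hx : σ x = x
    · rw [hx]
    · exact iff_of_true (hσ _ (σ.injective.ne hx)) (hσ x hx)
  rw [← Perm.ofSubtype_subtypePerm hmem hσ, ← map_pow, Set.ncard_eq_toFinset_card',
    Set.toFinset_card, ← Fintype.card_perm, pow_card_eq_one, map_one]

theorem IsThreeCycle.mul_pow_eq_one (hσ : IsThreeCycle σ) (hτ : IsThreeCycle τ) :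
    (σ * τ) ^ 5! = 1 := by
  by_cases hd : σ.Disjoint τ
  · have h120 : 5! = 3 * 40 := rfl
    rw [hd.commute.mul_pow, h120, pow_mul, pow_mul, hσ.pow_three_eq_one, hτ.pow_three_eq_one]
    simp
  · set S := {x | σ x ≠ x} with hS
    set T := {x | τ x ≠ x} with hT
    have inter : (S ∩ T).Nonempty := by
      simpa [Perm.Disjoint, Set.Nonempty, hS, hT] using hd
    have hSf : S.Finite := hσ.finite_setOf_apply_ne
    have hTf : T.Finite := hτ.finite_setOf_apply_ne
    have card : (S ∪ T).ncard ≤ 5 := by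
      have := Set.ncard_union_add_ncard_inter S T hSf hTf
      have := (Set.ncard_pos (hSf.inter_of_left T)).2 inter
      have : S.ncard = 3 := hσ
      have : T.ncard = 3 := hτ
      lia
    have moved : ∀ x, (σ * τ) x ≠ x → x ∈ S ∪ T := by
      intro x hx
      by_contra hxST
      simp only [hS, hT, Set.mem_union, Set.mem_ofPred_eq, not_or, not_not] at hxST
      exact hx (by rw [Perm.mul_apply, hxST.2, hxST.1])
    obtain ⟨k, hk⟩ := Nat.factorial_dvd_factorial card
    rw [hk, pow_mul, pow_factorial_eq_one_of_apply_ne_mem (hSf.union hTf) moved, one_pow]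

theorem isPeriodicPt_of_pow_eq_one {n : ℕ} (h : σ ^ n = 1) (x : X) : IsPeriodicPt σ n x := by
  rw [IsPeriodicPt, IsFixedPt, ← Perm.coe_pow, h, Perm.one_apply]

section

variable [DecidableEq X] {a b c d e f g i j : X}

theorem mul_conj_pow_ne_one_of_apply_eq (hab : σ a = b) (hbc : σ b = c) (hca : σ c = a)
    (hde : σ d = e) (hef : σ e = f) (hfd : σ f = d) (hg : σ g = g)
    (hne : [a, b, c, d, e, f, g].Nodup) :
    (σ * ((swap a d * swap b g) * σ * (swap a d * swap b g)⁻¹)) ^ 5! ≠ 1 := by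
  set ρ := σ * ((swap a d * swap b g) * σ * (swap a d * swap b g)⁻¹)
  intro hpow
  -- The product contains the 7-cycle `a ↦ f ↦ b ↦ c ↦ e ↦ d ↦ g ↦ a`.
  have seven : IsPeriodicPt ρ 7 a := by
    simp only [ρ, IsPeriodicPt, IsFixedPt, iterate_succ_apply, iterate_zero_apply, mul_inv_rev,
      swap_inv, Perm.mul_apply]
    grind
  have fixed : IsPeriodicPt ρ 1 a := (isPeriodicPt_of_pow_eq_one hpow a).gcd seven
  have image : ρ a = f := by
    simp only [ρ, mul_inv_rev, swap_inv, Perm.mul_apply]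
    grind
  have : ρ a = a := fixed
  grind

theorem mul_conj_pow_ne_one_of_apply_ne (hab : σ a = b) (hbc : σ b = c) (hca : σ c = a)
    (hde : σ d = e) (hef : σ e = f) (hfd : σ f = d) (hgi : σ g = i) (hij : σ i = j)
    (hjg : σ j = g) (hne : [a, b, c, d, e, f, g, i, j].Nodup) :
    (σ * ((swap a d * swap b g) * σ * (swap a d * swap b g)⁻¹)) ^ 5! ≠ 1 := by
  set ρ := σ * ((swap a d * swap b g) * σ * (swap a d * swap b g)⁻¹)
  intro hpow
  simp only [List.nodup_cons, List.mem_cons, not_or] at hne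
  -- The product contains the 9-cycle `a ↦ f ↦ b ↦ j ↦ c ↦ e ↦ d ↦ i ↦ g ↦ a`.
  have nine : IsPeriodicPt ρ 9 a := by
    simp [ρ, IsPeriodicPt, IsFixedPt, swap_apply_def, eq_comm, *]
  have three : IsPeriodicPt ρ 3 a := (isPeriodicPt_of_pow_eq_one hpow a).gcd nine
  have image : ρ (ρ (ρ a)) = j := by
    simp [ρ, swap_apply_def, eq_comm, *]
  have : ρ (ρ (ρ a)) = a := three
  grind

end

theorem nodup_orbits_of_pow_three_eq_one (h3 : σ ^ 3 = 1) {x y : X} (hx : σ x ≠ x) (hy : σ y ≠ y)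
    (hyx : y ∉ ({x, σ x, σ (σ x)} : Set X)) : [x, σ x, σ (σ x), y, σ y, σ (σ y)].Nodup := by
  have hσ3 : ∀ z, σ (σ (σ z)) = z := Perm.ext_iff.1 h3
  simp only [List.nodup_cons, List.mem_cons, List.not_mem_nil]
  grind

theorem isThreeCycle_of_forall_mul_conj_pow_eq_one [Infinite X] (h1 : σ ≠ 1) (h3 : σ ^ 3 = 1)
    (h : ∀ g ∈ FAlt X, (σ * (g * σ * g⁻¹)) ^ 5! = 1) : IsThreeCycle σ := by
  classical
  have hσ3 : ∀ x, σ (σ (σ x)) = x := Perm.ext_iff.1 h3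
  obtain ⟨a, ha⟩ : ∃ a, σ a ≠ a := by
    by_contra! hfix
    exact h1 (Perm.ext hfix)
  by_contra hcycle
  obtain ⟨d, hd, hda⟩ : ∃ d, σ d ≠ d ∧ d ∉ ({a, σ a, σ (σ a)} : Set X) := by
    by_contra! hfix
    refine hcycle (Set.ncard_eq_three.2 ⟨a, σ a, σ (σ a), ?_, ?_, ?_, ?_⟩)
    all_goals grind
  obtain ⟨g, hg⟩ :=
    Infinite.exists_notMem_finset ({a, σ a, σ (σ a), d, σ d, σ (σ d)} : Finset X)
  simp only [Finset.mem_insert, Finset.mem_singleton, not_or] at hg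
  have had := nodup_orbits_of_pow_three_eq_one h3 ha hd hda
  have hpow := h (swap a d * swap (σ a) g) (swap_mul_swap_mem_FAlt (by grind))
  by_cases hgfix : σ g = g
  · refine mul_conj_pow_ne_one_of_apply_eq rfl rfl (hσ3 a) rfl rfl (hσ3 d) hgfix ?_ hpow
    simp only [List.nodup_cons, List.mem_cons, List.not_mem_nil] at had ⊢
    grind
  · have hag := nodup_orbits_of_pow_three_eq_one h3 ha hgfix (by simp [hg])
    have hdg := nodup_orbits_of_pow_three_eq_one h3 hd hgfix (by simp [hg])
    refine mul_conj_pow_ne_one_of_apply_ne rfl rfl (hσ3 a) rfl rfl (hσ3 d) rfl rfl (hσ3 g) ?_ hpow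
    simp only [List.nodup_cons, List.mem_cons, List.not_mem_nil] at had hag hdg ⊢
    grind

theorem isThreeCycle_iff_of_FAlt_le [Infinite X] {H : Subgroup (Perm X)} (hH : FAlt X ≤ H)
    (σ : H) :
    IsThreeCycle (σ : Perm X) ↔ σ ≠ 1 ∧ σ ^ 3 = 1 ∧ ∀ g : H, (σ * (g * σ * g⁻¹)) ^ 5! = 1 := by
  simp only [ne_eq, Subtype.ext_iff, Subtype.forall, Subgroup.coe_mul, Subgroup.coe_pow,
    Subgroup.coe_inv, Subgroup.coe_one]
  exact ⟨fun hσ ↦ ⟨hσ.ne_one, hσ.pow_three_eq_one, fun g _ ↦ hσ.mul_pow_eq_one (hσ.conj g)⟩,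
    fun ⟨h1, h3, h⟩ ↦ isThreeCycle_of_forall_mul_conj_pow_eq_one h1 h3 fun g hg ↦ h g (hH hg)⟩

end ThreeCycle

section FAlt

variable {X : Type*}

instance : (FAlt X).Normal where
  conj_mem σ hσ g := by
    have le : FAlt X ≤ (FAlt X).comap (MulAut.conj g).toMonoidHom :=
      (Subgroup.closure_le _).2 fun _ hτ ↦ (IsThreeCycle.conj hτ g).mem_FAlt
    exact le hσ

theorem finite_setOf_apply_ne_of_mem_FAlt {σ : Perm X} (hσ : σ ∈ FAlt X) :
    {x | σ x ≠ x}.Finite := by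
  induction hσ using Subgroup.closure_induction with
  | mem σ hσ => exact IsThreeCycle.finite_setOf_apply_ne hσ
  | one => simp
  | mul σ τ _ _ hσ hτ =>
    refine (hσ.union hτ).subset fun x hx ↦ ?_
    by_contra hfix
    simp only [Set.mem_union, Set.mem_ofPred_eq, not_or, not_not] at hfix
    exact hx (by rw [Perm.mul_apply, hfix.2, hfix.1])
  | inv σ _ hσ => exact hσ.subset fun x hx hfix ↦ hx (Perm.inv_eq_iff_eq.2 hfix.symm)

end FAlt

section Rigidity

variable {X Y : Type*} {H : Subgroup (Perm X)} {K : Subgroup (Perm Y)}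

theorem isThreeCycle_map_iff [Infinite X] [Infinite Y] (hH : FAlt X ≤ H) (hK : FAlt Y ≤ K)
    (φ : H ≃* K) (σ : H) : IsThreeCycle (φ σ : Perm Y) ↔ IsThreeCycle (σ : Perm X) := by
  simp only [isThreeCycle_iff_of_FAlt_le hH, isThreeCycle_iff_of_FAlt_le hK,
    φ.surjective.forall, ← map_mul, ← map_inv, ← map_pow, ne_eq, map_eq_one_iff φ φ.injective]

theorem map_mem_FAlt [Infinite X] [Infinite Y] (hH : FAlt X ≤ H) (hK : FAlt Y ≤ K) (φ : H ≃* K)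
    {h : H} (hh : (h : Perm X) ∈ FAlt X) : (φ h : Perm Y) ∈ FAlt Y := by
  have le : FAlt X ≤ ((FAlt Y).comap (K.subtype.comp φ.toMonoidHom)).map H.subtype :=
    (Subgroup.closure_le _).2 fun σ hσ ↦
      ⟨⟨σ, hH (IsThreeCycle.mem_FAlt hσ)⟩,
        ((isThreeCycle_map_iff hH hK φ ⟨σ, _⟩).2 hσ).mem_FAlt, rfl⟩
  obtain ⟨h', hh', heq⟩ := le hh
  rwa [Subtype.ext heq] at hh'

theorem IsThreeCycle.apply_eq_of_commute {τ d : Perm X} (hτ : IsThreeCycle τ) (hd : d * d = 1)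
    (hcomm : Commute d τ) {x : X} (hx : τ x ≠ x) : d x = x := by
  have hdd : ∀ z, d (d z) = z := Perm.ext_iff.1 hd
  have hdτ : ∀ z, d (τ z) = τ (d z) := Perm.ext_iff.1 hcomm
  have hτ3 : ∀ z, τ (τ (τ z)) = z := Perm.ext_iff.1 hτ.pow_three_eq_one
  have hττ := hτ.apply_apply_ne hx
  have moved : d x ∈ {z | τ z ≠ z} := by
    rw [Set.mem_ofPred_eq, ← hdτ]
    exact d.injective.ne hx
  rw [hτ.setOf_apply_ne_eq hx] at moved
  grind

theorem map_apply_eq_of_commute [Infinite X] [Infinite Y] (hH : FAlt X ≤ H) (hK : FAlt Y ≤ K)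
    (φ : H ≃* K) {σ d : H} (hσ : IsThreeCycle (σ : Perm X)) (hd : d * d = 1)
    (hcomm : Commute d σ) {y : Y} (hy : (φ σ : Perm Y) y ≠ y) : (φ d : Perm Y) y = y := by
  refine ((isThreeCycle_map_iff hH hK φ σ).2 hσ).apply_eq_of_commute ?_
    ((hcomm.map φ).map K.subtype) hy
  rw [Subgroup.subtype_apply, ← Subgroup.coe_mul, ← map_mul, hd, map_one, Subgroup.coe_one]

/-- `y` corresponds to `x` under the isomorphism `φ` of permutation groups if `φ` sends the
involutions of `FAlt X` fixing `x` to permutations fixing `y`. For groups containing `FAlt` this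
recovers the bijection inducing `φ`. -/
def Corresponds (φ : H ≃* K) (x : X) (y : Y) : Prop :=
  ∀ c : H, (c : Perm X) ∈ FAlt X → c * c = 1 → (c : Perm X) x = x → (φ c : Perm Y) y = y

theorem exists_commute_conj_commute [Infinite X] [DecidableEq X] {x p q r t : X}
    (hne : [x, p, q, r, t].Nodup) {c : Perm X} (hc : c ∈ FAlt X) (hcx : c x = x) :
    ∃ d ∈ FAlt X, d * d = 1 ∧ Commute d (swap x p * swap p q) ∧
      Commute (d * c * d⁻¹) (swap x r * swap r t) := by
  have finite : ({z | c z ≠ z} ∪ {x, p, q, r, t}).Finite :=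
    (finite_setOf_apply_ne_of_mem_FAlt hc).union (Set.toFinite _)
  obtain ⟨u, hu⟩ := finite.exists_notMem
  obtain ⟨v, hv⟩ := (finite.insert u).exists_notMem
  simp only [Set.mem_insert_iff, Set.mem_union, Set.mem_ofPred_eq, Set.mem_singleton_iff, not_or,
    not_not] at hu hv
  simp only [List.nodup_cons, List.mem_cons, List.not_mem_nil] at hne
  refine ⟨swap r u * swap t v, swap_mul_swap_mem_FAlt (by grind), ?_, ?_, ?_⟩
  · ext z
    simp only [Perm.mul_apply, Perm.one_apply]
    grind
  · refine Perm.Disjoint.commute fun z ↦ ?_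
    simp only [Perm.mul_apply]
    grind
  · refine Perm.Disjoint.commute fun z ↦ ?_
    simp only [Perm.mul_apply, mul_inv_rev, swap_inv]
    by_cases hz : z = x ∨ z = r ∨ z = t
    · left
      rcases hz with rfl | rfl | rfl <;> grind
    · right
      grind

theorem exists_map_apply_ne_of_not_commute (φ : H ≃* K) {σ τ : H} (hστ : ¬Commute σ τ) :
    ∃ y, (φ σ : Perm Y) y ≠ y ∧ (φ τ : Perm Y) y ≠ y := by
  by_contra! hdisj
  have hcomm : Commute (φ σ : Perm Y) (φ τ) :=
    Perm.Disjoint.commute fun y ↦ or_iff_not_imp_left.2 (hdisj y)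
  exact hστ (.of_map φ.injective (.of_map K.subtype_injective hcomm))

theorem exists_corresponds [Infinite X] [Infinite Y] (hH : FAlt X ≤ H) (hK : FAlt Y ≤ K)
    (φ : H ≃* K) (x : X) : ∃ y, Corresponds φ x y := by
  classical
  obtain ⟨p, hp⟩ := Infinite.exists_notMem_finset {x}
  obtain ⟨q, hq⟩ := Infinite.exists_notMem_finset {x, p}
  obtain ⟨r, hr⟩ := Infinite.exists_notMem_finset {x, p, q}
  obtain ⟨t, ht⟩ := Infinite.exists_notMem_finset {x, p, q, r}
  have hσ : IsThreeCycle (swap x p * swap p q) :=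
    isThreeCycle_swap_mul_swap (by grind) (by grind) (by grind)
  have hτ : IsThreeCycle (swap x r * swap r t) :=
    isThreeCycle_swap_mul_swap (by grind) (by grind) (by grind)
  have not_comm : ¬Commute (swap x p * swap p q) (swap x r * swap r t) := by
    intro hcomm
    have : swap x p (swap p q (swap x r (swap r t x))) =
      swap x r (swap r t (swap x p (swap p q x))) := Perm.ext_iff.1 hcomm x
    grind
  set σ : H := ⟨swap x p * swap p q, hH hσ.mem_FAlt⟩
  set τ : H := ⟨swap x r * swap r t, hH hτ.mem_FAlt⟩
  obtain ⟨y, hyσ, hyτ⟩ := exists_map_apply_ne_of_not_commute φ (σ := σ) (τ := τ)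
    fun hcomm ↦ not_comm (hcomm.map H.subtype)
  refine ⟨y, fun c hc hcc hcx ↦ ?_⟩
  obtain ⟨d, hd, hdd, hdσ, hdτ⟩ :=
    exists_commute_conj_commute (p := p) (q := q) (r := r) (t := t) (by grind) hc hcx
  lift d to H using hH hd
  have hdy : (φ d : Perm Y) y = y :=
    map_apply_eq_of_commute hH hK φ (σ := σ) hσ (Subtype.ext hdd)
      (.of_map H.subtype_injective hdσ) hyσ
  have hdcy : (φ (d * c * d⁻¹) : Perm Y) y = y :=
    map_apply_eq_of_commute hH hK φ (σ := τ) hτ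
      (by rw [conj_mul, hcc, mul_one, mul_inv_cancel]) (.of_map H.subtype_injective hdτ) hyτ
  rw [map_mul, map_mul, map_inv, Subgroup.coe_mul, Subgroup.coe_mul, Subgroup.coe_inv,
    Perm.mul_apply, Perm.mul_apply, Perm.inv_eq_iff_eq.2 hdy.symm] at hdcy
  exact (φ d : Perm Y).injective (hdcy.trans hdy.symm)

namespace Corresponds

theorem eq_of_symm [Infinite X] [Infinite Y] (hH : FAlt X ≤ H) (hK : FAlt Y ≤ K) {φ : H ≃* K}
    {x x' : X} {y : Y} (h : Corresponds φ x y) (h' : Corresponds φ.symm y x') : x = x' := by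
  classical
  by_contra hne
  obtain ⟨u, hu⟩ := Infinite.exists_notMem_finset {x, x'}
  obtain ⟨v, hv⟩ := Infinite.exists_notMem_finset {x, x', u}
  obtain ⟨w, hw⟩ := Infinite.exists_notMem_finset {x, x', u, v}
  have hmem : swap x' u * swap v w ∈ FAlt X := swap_mul_swap_mem_FAlt (by grind)
  set c : H := ⟨swap x' u * swap v w, hH hmem⟩ with hc
  have hcc : c * c = 1 := by
    ext z
    simp only [hc, Subgroup.coe_mul, Subgroup.coe_one, Perm.mul_apply, Perm.one_apply]
    grind
  have hcx : swap x' u (swap v w x) = x := by grind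
  have hcx' : (φ.symm (φ c) : Perm X) x' = x' :=
    h' (φ c) (map_mem_FAlt hH hK φ hmem) (by rw [← map_mul, hcc, map_one]) (h c hmem hcc hcx)
  rw [φ.symm_apply_apply] at hcx'
  have : swap x' u (swap v w x') = x' := hcx'
  grind

theorem map_apply {φ : H ≃* K} {x : X} {y : Y} (h : Corresponds φ x y) (g : H) :
    Corresponds φ ((g : Perm X) x) ((φ g : Perm Y) y) := by
  intro c hc hcc hcx
  have hfix : (φ (g⁻¹ * c * g) : Perm Y) y = y := by
    refine h _ ?_ (by simp [mul_assoc, ← mul_assoc c, hcc]) ?_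
    · simpa using Subgroup.Normal.conj_mem inferInstance _ hc (g : Perm X)⁻¹
    · simp [hcx]
  simpa [Equiv.symm_apply_eq] using hfix

end Corresponds

theorem exists_equiv_of_mulEquiv [Infinite X] [Infinite Y] (hH : FAlt X ≤ H) (hK : FAlt Y ≤ K)
    (φ : H ≃* K) :
    ∃ s : X ≃ Y, ∀ (g : H) (x : X), (φ g : Perm Y) (s x) = s ((g : Perm X) x) := by
  choose s hs using exists_corresponds hH hK φ
  choose s' hs' using exists_corresponds hK hH φ.symm
  have left_inv : LeftInverse s' s := fun x ↦ ((hs x).eq_of_symm hH hK (hs' (s x))).symm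
  have right_inv : RightInverse s' s := fun y ↦ ((hs' y).eq_of_symm hK hH (hs (s' y))).symm
  refine ⟨⟨s, s', left_inv, right_inv⟩, fun g x ↦ ?_⟩
  have := ((hs x).map_apply g).eq_of_symm hH hK (hs' _)
  exact (right_inv _).symm.trans (congrArg s this.symm)

end Rigidity

theorem twistedConj_equivalence {G : Type*} [Group G] (φ : G ≃* G) :
    Equivalence (TwistedConj φ) where
  refl a := ⟨1, by simp⟩
  symm := by
    rintro a _ ⟨x, rfl⟩
    exact ⟨x⁻¹, by simp [mul_assoc]⟩
  trans := by
    rintro a _ _ ⟨x, rfl⟩ ⟨y, rfl⟩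
    exact ⟨x * y, by simp [mul_assoc]⟩

theorem infinite_quot_of_forall_exists_lt {α β : Type*} [Preorder β] {r : α → α → Prop}
    (hr : Equivalence r) (F : α → β) (hF : ∀ a b, r a b → ¬F a < F b) (P : α → Prop) {a₀ : α}
    (h₀ : P a₀) (step : ∀ a, P a → ∃ b, P b ∧ F a < F b) : Infinite (Quot r) := by
  choose next hnext hlt using step
  let succ (a : {a // P a}) : {a // P a} := ⟨next a a.2, hnext a a.2⟩
  let a (n : ℕ) : {a // P a} := succ^[n] ⟨a₀, h₀⟩
  have hmono : StrictMono fun n : ℕ ↦ F (a n) := by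
    refine strictMono_nat_of_lt_succ fun n ↦ ?_
    rw [show a (n + 1) = succ (a n) from iterate_succ_apply' ..]
    exact hlt (a n) (a n).2
  refine Infinite.of_injective (fun n : ℕ ↦ Quot.mk r (a n)) fun m n hmn ↦ ?_
  have hmn : r (a m) (a n) := hr.eqvGen_iff.1 (Quot.eqvGen_exact hmn)
  exact (lt_trichotomy m n).resolve_left (fun h ↦ hF _ _ hmn (hmono h)) |>.resolve_right
    fun h ↦ hF _ _ (hr.symm hmn) (hmono h)

section Agreement

variable {X : Type*}

theorem mem_of_mem_periodicPts_of_mapsTo {h : X → X} {s : Set X} {x : X} (hs : Set.MapsTo h s s)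
    (hx : x ∈ periodicPts h) (hhx : h x ∈ s) : x ∈ s := by
  obtain ⟨n, hn, hper⟩ := hx
  have mem : h^[n - 1] (h x) ∈ s := hs.iterate (n - 1) hhx
  rwa [← iterate_succ_apply, Nat.succ_eq_add_one, Nat.sub_add_cancel hn, hper] at mem

/-- The points at which two permutations agree. Up to translation it is an invariant of the
twisted conjugacy class of `σ` when `s` induces the automorphism. -/
def agreement (s σ : Perm X) : Set X :=
  {x | σ x = s x}

theorem mem_agreement {s σ : Perm X} {x : X} : x ∈ agreement s σ ↔ σ x = s x :=
  Iff.rfl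

theorem exists_agreement_mul_ssuperset {s σ : Perm X} (h : (agreement s σ)ᶜ.Infinite) :
    ∃ τ ∈ FAlt X, agreement s σ ⊂ agreement s (σ * τ) ∧ (agreement s (σ * τ))ᶜ.Infinite := by
  classical
  obtain ⟨x, hx⟩ := h.nonempty
  set y := σ⁻¹ (s x)
  have hσy : σ y = s x := σ.apply_symm_apply (s x)
  obtain ⟨z, hz, hzxy⟩ := h.exists_notMem_finset {x, y}
  simp only [Set.mem_compl_iff, mem_agreement] at hx hz
  have hyx : y ≠ x := fun hyx ↦ hx (hyx ▸ hσy)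
  have hy : σ y ≠ s y := hσy.trans_ne (s.injective.ne hyx.symm)
  have hτ : IsThreeCycle (swap x y * swap y z) :=
    isThreeCycle_swap_mul_swap (by grind) (by grind) (by grind)
  refine ⟨_, hτ.mem_FAlt, ⟨fun w hw ↦ ?_, fun hsub ↦ hx (hsub ?_)⟩,
    (h.sdiff (Set.toFinite {x, y, z})).mono fun w hw ↦ ?_⟩
  all_goals
    simp only [mem_agreement, Set.mem_sdiff, Set.mem_compl_iff, Perm.mul_apply] at *
    grind

theorem exists_agreement_mul_ssubset {s σ : Perm X} (h : (agreement s σ).Infinite) :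
    ∃ τ ∈ FAlt X, agreement s (σ * τ) ⊂ agreement s σ ∧ (agreement s (σ * τ)).Infinite := by
  classical
  obtain ⟨x, hx⟩ := h.nonempty
  obtain ⟨y, hy, hyx⟩ := h.exists_notMem_finset {x}
  obtain ⟨z, hz, hzxy⟩ := h.exists_notMem_finset {x, y}
  have hτ : IsThreeCycle (swap x y * swap y z) :=
    isThreeCycle_swap_mul_swap (by grind) (by grind) (by grind)
  simp only [mem_agreement] at hx hy hz
  have hxy : s y ≠ s x := s.injective.ne (by grind)
  have hyz : s z ≠ s y := s.injective.ne (by grind)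
  have hxz : s x ≠ s z := s.injective.ne (by grind)
  have disagree : σ (swap x y (swap y z x)) ≠ s x := by grind
  refine ⟨_, hτ.mem_FAlt, ⟨fun w hw ↦ ?_, fun hsub ↦ disagree (hsub hx)⟩,
    (h.sdiff (Set.toFinite {x, y, z})).mono fun w hw ↦ ?_⟩
  all_goals
    simp only [mem_agreement, Set.mem_sdiff, Perm.mul_apply] at *
    grind

theorem not_agreement_ssubset_of_twistedConj {H : Subgroup (Perm X)}
    (hper : ∀ h ∈ H, ∀ x, x ∈ periodicPts h) {φ : H ≃* H} {s : Perm X}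
    (hs : ∀ (g : H) (x : X), (φ g : Perm X) (s x) = s ((g : Perm X) x)) {a b : H}
    (hab : TwistedConj φ a b) : ¬agreement s a ⊂ agreement s b := by
  obtain ⟨g, rfl⟩ := hab
  have preimage : agreement s ((φ g)⁻¹ * a * g : H) = (g : Perm X) ⁻¹' agreement s a := by
    ext x
    simp [mem_agreement, ← hs, Equiv.symm_apply_eq]
  rintro ⟨hsub, hnot⟩
  rw [preimage] at hsub hnot
  exact hnot fun x hx ↦ mem_of_mem_periodicPts_of_mapsTo hsub (hper g g.2 x) hx

end Agreement

theorem rInfinity_of_forall_mem_periodicPts {X : Type*} [Infinite X] {H : Subgroup (Perm X)}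
    (hH : FAlt X ≤ H) (hper : ∀ h ∈ H, ∀ x, x ∈ periodicPts h) : RInfinity H := by
  intro φ
  obtain ⟨s, hs⟩ := exists_equiv_of_mulEquiv hH hH φ
  have hF : ∀ a b : H, TwistedConj φ a b → ¬agreement s a ⊂ agreement s b :=
    fun a b ↦ not_agreement_ssubset_of_twistedConj hper hs
  by_cases h₁ : (agreement s ((1 : H) : Perm X)).Infinite
  · refine infinite_quot_of_forall_exists_lt (twistedConj_equivalence φ)
      (fun a : H ↦ OrderDual.toDual (agreement s a))
      (fun a b hab ↦ hF b a ((twistedConj_equivalence φ).symm hab))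
      (fun a ↦ (agreement s (a : Perm X)).Infinite) h₁ fun a ha ↦ ?_
    obtain ⟨τ, hτ, hlt, hinf⟩ := exists_agreement_mul_ssubset ha
    exact ⟨a * ⟨τ, hH hτ⟩, hinf, OrderDual.toDual_lt_toDual.2 hlt⟩
  · have h₁ : (agreement s ((1 : H) : Perm X))ᶜ.Infinite :=
      (Set.not_infinite.1 h₁).infinite_compl
    refine infinite_quot_of_forall_exists_lt (twistedConj_equivalence φ)
      (fun a : H ↦ agreement s (a : Perm X)) hF
      (fun a ↦ (agreement s (a : Perm X))ᶜ.Infinite) h₁ fun a ha ↦ ?_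
    obtain ⟨τ, hτ, hlt, hinf⟩ := exists_agreement_mul_ssuperset ha
    exact ⟨a * ⟨τ, hH hτ⟩, hinf, hlt⟩

section FiniteOrbits

theorem mem_periodicPts_of_finite_of_mapsTo {X : Type*} {f : X → X} (hf : Injective f) {s : Set X}
    (hs : s.Finite) (hmaps : Set.MapsTo f s s) {x : X} (hx : x ∈ s) : x ∈ periodicPts f := by
  have := hs.to_subtype
  have semiconj : Semiconj Subtype.val (hmaps.restrict f s s) f := fun _ ↦ rfl
  exact semiconj.mapsTo_periodicPts ((hmaps.restrict_inj.2 hf.injOn).mem_periodicPts ⟨x, hx⟩)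

variable {G X : Type*} [Group G]

theorem mem_periodicPts_of_mem_range_sup_FAlt {ι : G →* Perm X}
    (hι : ∀ x, (Set.range fun g ↦ ι g x).Finite) {h : Perm X} (hh : h ∈ ι.range ⊔ FAlt X) (x : X) :
    x ∈ periodicPts h := by
  obtain ⟨_, ⟨g, rfl⟩, f, hf, rfl⟩ := Subgroup.mem_sup_of_normal_right.1 hh
  set S := {z | f z ≠ z} ∪ {x}
  have hS : S.Finite := (finite_setOf_apply_ne_of_mem_FAlt hf).union (Set.finite_singleton x)
  set T := ⋃ z ∈ S, Set.range fun g ↦ ι g z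
  have hST : S ⊆ T := fun z hz ↦ Set.mem_biUnion hz ⟨1, by simp⟩
  have hfT : Set.MapsTo f T T := by
    intro z hz
    by_cases hfz : f z = z
    · rwa [hfz]
    · exact hST (.inl (f.injective.ne hfz))
  have hgT : Set.MapsTo (ι g) T T := by
    intro z hz
    simp only [T, Set.mem_iUnion₂] at hz
    obtain ⟨y, hy, g', rfl⟩ := hz
    exact Set.mem_biUnion hy ⟨g * g', by simp⟩
  exact mem_periodicPts_of_finite_of_mapsTo (ι g * f).injective (hS.biUnion fun z _ ↦ hι z)
    (hgT.comp hfT) (hST (.inr rfl))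

theorem rInfinity_range_sup_FAlt [Infinite X] {ι : G →* Perm X}
    (hι : ∀ x, (Set.range fun g ↦ ι g x).Finite) : RInfinity ↥(ι.range ⊔ FAlt X) :=
  rInfinity_of_forall_mem_periodicPts le_sup_right fun _ ↦ mem_periodicPts_of_mem_range_sup_FAlt hι

end FiniteOrbits

theorem exists_faithful_action_rinfinity_of_residuallyFinite_general {G : Type u} [Group G]
    [Group.ResiduallyFinite G] :
    ∃ (X : Type u) (ι : G →* Perm X), Injective ι ∧ RInfinity ↥(ι.range ⊔ FAlt X) := by
  let X := Σ i : ℕ × FiniteIndexNormalSubgroup G, G ⧸ i.2.toSubgroup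
  have : Nonempty (FiniteIndexNormalSubgroup G) := ⟨.ofSubgroup ⊤⟩
  refine ⟨X, MulAction.toPermHom G X, ?_, rInfinity_range_sup_FAlt ?_⟩
  · rw [injective_iff_map_eq_one]
    intro g hg
    refine Group.eq_one_iff_forall_finiteIndexNormalSubroup g fun N ↦ ?_
    have hfix : (⟨(0, N), g • 1⟩ : X) = ⟨(0, N), 1⟩ := Perm.ext_iff.1 hg ⟨(0, N), 1⟩
    have hgN : ((g * 1 : G) : G ⧸ N.toSubgroup) = 1 :=
      eq_of_heq (Sigma.mk.inj hfix).2
    rwa [mul_one, QuotientGroup.eq_one_iff] at hgN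
  · rintro ⟨i, q⟩
    refine (Set.finite_range (Sigma.mk i : _ → X)).subset ?_
    rintro _ ⟨g, rfl⟩
    exact ⟨g • q, rfl⟩

/-- For any infinite residually finite group `G` there is a faithful action of `G` on a set
`X` such that `⟨G, FAlt X⟩` has the `R∞` property. -/
theorem exists_faithful_action_rinfinity_of_residuallyFinite {G : Type u} [Group G]
    [Infinite G]
    (hrf : ∀ g : G, g ≠ 1 → ∃ (F : Type u) (_ : Group F) (_ : Finite F) (φ : G →* F),
      φ g ≠ 1) :
    ∃ (X : Type u) (ι : G →* Equiv.Perm X), Function.Injective ι ∧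
      RInfinity ↥(ι.range ⊔ FAlt X) := by
  have := Group.residuallyFinite_of_forall_exists_finite_monoidHom hrf
  exact exists_faithful_action_rinfinity_of_residuallyFinite_general
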